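/- Let c ∈ C ↦ H_c be a continuous family (for the C² compact-open topology) of C²-convex-in-the-fiber Hamiltonians on T*M, C a metric space. Fix (x, c₀, λ₀) ∈ 𝒰₋^∞ and ε > 0. Then there exist a neighborhood 𝒩₊ of (x, c₀, λ₀) in T*M × C × ℝ and T > 0 such that: (a) for every (−t, y, c, λ) ∈ 𝒰₋ with (y, c, λ) ∈ 𝒩₊ and t ≥ T, one has h(−t, y, c, λ) ≤ h₊(x, c₀, λ₀) + ε·Id; (b) for every (y, c, λ) ∈ 𝒩₊ ∩ 𝒰₋^∞, one has h₊(y, c, λ) ≤ h₊(x, c₀, λ₀) + ε·Id. -/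

import Mathlib

/-!
Throughout, the closed manifold `M = 𝕋^d = ℝ^d/ℤ^d` is modelled by `ℤ^d`-periodic
functions on `ℝ^d` (with the Euclidean structure), and its (co)tangent bundle
`T^*𝕋^d = 𝕋^d × ℝ^d` by `ℤ^d`-periodic (in the base variable) data on `ℝ^d × ℝ^d`.
-/

open scoped RealInnerProductSpace
open Filter MeasureTheory Metric Set Asymptotics

noncomputable section

/-- The universal cover `ℝ^d` of the torus `𝕋^d`. -/
abbrev Euc (d : ℕ) : Type := EuclideanSpace ℝ (Fin d)

/-- The phase space `T^*𝕋^d`, modelled as `ℝ^d × ℝ^d` with `ℤ^d`-periodic data. -/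
abbrev Phase (d : ℕ) : Type := Euc d × Euc d

/-- An integer vector, viewed in `ℝ^d`. -/
def intVec {d : ℕ} (k : Fin d → ℤ) : Euc d := WithLp.toLp 2 (fun i => (k i : ℝ))

/-- `f` descends to the torus `𝕋^d = ℝ^d/ℤ^d`. -/
def PerFun {d : ℕ} {α : Type*} (f : Euc d → α) : Prop :=
  ∀ (k : Fin d → ℤ) (x : Euc d), f (x + intVec k) = f x

/-- `H` descends to `T^*𝕋^d = 𝕋^d × ℝ^d`. -/
def PerPhase {d : ℕ} {α : Type*} (H : Phase d → α) : Prop :=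
  ∀ (k : Fin d → ℤ) (q p : Euc d), H (q + intVec k, p) = H (q, p)

/-- Positive definiteness of the fiberwise Hessian. -/
def ConvexInFiber {d : ℕ} (H : Phase d → ℝ) : Prop :=
  ∀ q p v, v ≠ 0 → 0 < iteratedFDeriv ℝ 2 (fun p' => H (q, p')) p ![v, v]

/-- A `C²` Tonelli Hamiltonian on `T^*𝕋^d`. -/
structure TonelliHam {d : ℕ} (H : Phase d → ℝ) : Prop where
  periodic : PerPhase H
  smooth : ContDiff ℝ 2 H
  convex : ConvexInFiber H
  superlinear : ∀ A : ℝ, ∃ B : ℝ, ∀ q p, A * ‖p‖ + B ≤ H (q, p)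

/-- A `C²` Tonelli Lagrangian on `T𝕋^d`. -/
structure TonelliLag {d : ℕ} (L : Phase d → ℝ) : Prop where
  periodic : PerPhase L
  smooth : ContDiff ℝ 2 L
  convex : ConvexInFiber L
  superlinear : ∀ A : ℝ, ∃ B : ℝ, ∀ q v, A * ‖v‖ + B ≤ L (q, v)

/-- The Lagrangian associated to `H` by Legendre duality. -/
def LegendreL {d : ℕ} (H : Phase d → ℝ) (x : Phase d) : ℝ :=
  sSup {r | ∃ p : Euc d, r = ⟪p, x.2⟫ - H (x.1, p)}

/-- The Mañé critical value `α(H)`. -/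
def maneCritical {d : ℕ} (H : Phase d → ℝ) : ℝ :=
  sInf {c | ∃ u : Euc d → ℝ, ContDiff ℝ (⊤ : ℕ∞) u ∧ PerFun u ∧ ∀ q, H (q, gradient u q) ≤ c}

/-- The Mañé critical value `α(c)` of the cohomology class of the constant form `cf`. -/
def maneCriticalOf {d : ℕ} (H : Phase d → ℝ) (cf : Euc d) : ℝ :=
  maneCritical fun x : Phase d => H (x.1, cf + x.2)

/-- `γ` is absolutely continuous on `[a,b]` with a.e. derivative `γ'`. -/
def ACOn {d : ℕ} (γ γ' : ℝ → Euc d) (a b : ℝ) : Prop :=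
  IntervalIntegrable γ' volume a b ∧ ∀ t ∈ Icc a b, γ t = γ a + ∫ s in a..t, γ' s

/-- Values entering the (discounted, cohomologically twisted) Lax–Oleinik infimum. -/
def LOvals {d : ℕ} (L : Phase d → ℝ) (cf : Euc d) (av lam : ℝ) (u : Euc d → ℝ) (t : ℝ)
    (q : Euc d) : Set ℝ :=
  {r | ∃ γ γ' : ℝ → Euc d, ACOn γ γ' (-t) 0 ∧ γ 0 = q ∧
     IntervalIntegrable (fun s => Real.exp (lam * s) * (L (γ s, γ' s) - ⟪cf, γ' s⟫ + av))
       volume (-t) 0 ∧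
     r = Real.exp (-(lam * t)) * u (γ (-t)) +
         ∫ s in (-t)..0, Real.exp (lam * s) * (L (γ s, γ' s) - ⟪cf, γ' s⟫ + av)}

/-- The (discounted, twisted) Lax–Oleinik semigroup `T^{cf,λ}_t u (q)`. -/
def LaxOleinik {d : ℕ} (L : Phase d → ℝ) (cf : Euc d) (av lam : ℝ) (u : Euc d → ℝ) (t : ℝ)
    (q : Euc d) : ℝ :=
  sInf (LOvals L cf av lam u t q)

/-- A weak K.A.M. solution: a fixed point of the Lax–Oleinik semigroup. -/
def IsWeakKAM {d : ℕ} (H : Phase d → ℝ) (u : Euc d → ℝ) : Prop :=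
  Continuous u ∧ PerFun u ∧
    ∀ t > (0:ℝ), ∀ q, LaxOleinik (LegendreL H) 0 (maneCritical H) 0 u t q = u q

/-- A fixed point of the modified Lax–Oleinik semigroup `T^c_t` for the class `cf`. -/
def IsFixedPtModified {d : ℕ} (H : Phase d → ℝ) (cf : Euc d) (u : Euc d → ℝ) : Prop :=
  Continuous u ∧ PerFun u ∧
    ∀ t > (0:ℝ), ∀ q, LaxOleinik (LegendreL H) cf (maneCriticalOf H cf) 0 u t q = u q

/-- The discounted solution `u_λ` of `λu + H(x,du) = α(H)`, via its variational formula. -/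
def IsDiscountedSol {d : ℕ} (H : Phase d → ℝ) (lam : ℝ) (u : Euc d → ℝ) : Prop :=
  Continuous u ∧ PerFun u ∧
    ∀ q, u q = sInf {r | ∃ γ γ' : ℝ → Euc d, (∀ a ≤ (0:ℝ), ACOn γ γ' a 0) ∧ γ 0 = q ∧
      IntegrableOn (fun s => Real.exp (lam * s) * (LegendreL H (γ s, γ' s) + maneCritical H))
        (Iic 0) volume ∧
      r = ∫ s in Iic (0:ℝ), Real.exp (lam * s) * (LegendreL H (γ s, γ' s) + maneCritical H)}

/-- The `λ`-discounted Hamiltonian vector field `(∂H/∂p, -∂H/∂q - λp)`. -/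
def hamVF {d : ℕ} (H : Phase d → ℝ) (lam : ℝ) (x : Phase d) : Phase d :=
  (gradient (fun p => H (x.1, p)) x.2, -gradient (fun q => H (q, x.2)) x.1 - lam • x.2)

/-- `φ` is the (conformally) Hamiltonian flow of equation (1) for `(H, λ)`. -/
def IsConformalFlow {d : ℕ} (H : Phase d → ℝ) (lam : ℝ) (φ : ℝ → Phase d → Phase d) : Prop :=
  (∀ x, φ 0 x = x) ∧ (∀ s t x, φ s (φ t x) = φ (s + t) x) ∧
    ∀ x t, HasDerivAt (fun τ => φ τ x) (hamVF H lam (φ t x)) t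

/-- The vertical subspace `V = ker Dπ`. -/
def Vert (d : ℕ) : Submodule ℝ (Phase d) :=
  Submodule.prod (⊥ : Submodule ℝ (Euc d)) (⊤ : Submodule ℝ (Euc d))

/-- The image `Dφ_t(y) V(y)` of the vertical at `y` by the linearized flow. -/
def pushV {d : ℕ} (φ : ℝ → Phase d → Phase d) (t : ℝ) (y : Phase d) : Submodule ℝ (Phase d) :=
  Submodule.map (fderiv ℝ (φ t) y).toLinearMap (Vert d)

/-- `G_t(x) = Dφ_t V(φ_{-t} x)`. -/
def GreenT {d : ℕ} (φ : ℝ → Phase d → Phase d) (t : ℝ) (x : Phase d) : Submodule ℝ (Phase d) :=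
  pushV φ t (φ (-t) x)

/-- The piece of orbit `(φ_t x)_{t ∈ I}` has no conjugate points. -/
def NoConjPts {d : ℕ} (φ : ℝ → Phase d → Phase d) (x : Phase d) (I : Set ℝ) : Prop :=
  ∀ s ∈ I, ∀ t ∈ I, s ≠ t → pushV φ (t - s) (φ s x) ⊓ Vert d = ⊥

/-- `S` is the height `ℋ(G)` of the Lagrangian subspace `G`:
`G` is the graph `{(δθ, S δθ)}` of the symmetric map `S`. -/
def IsHeight {d : ℕ} (G : Submodule ℝ (Phase d)) (S : Euc d →L[ℝ] Euc d) : Prop :=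
  (∀ v w, ⟪S v, w⟫ = ⟪v, S w⟫) ∧ G = LinearMap.graph (S : Euc d →ₗ[ℝ] Euc d)

open Classical in
/-- The height of a subspace transverse to the vertical (junk value `0` otherwise). -/
def heightOf {d : ℕ} (G : Submodule ℝ (Phase d)) : Euc d →L[ℝ] Euc d :=
  if h : ∃ S, IsHeight G S then h.choose else 0

/-- Order of symmetric operators as quadratic forms. -/
def SymLE {d : ℕ} (S T : Euc d →L[ℝ] Euc d) : Prop := ∀ v, ⟪S v, v⟫ ≤ ⟪T v, v⟫

/-- Strict order of symmetric operators as quadratic forms (positive definite difference). -/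
def SymLT {d : ℕ} (S T : Euc d →L[ℝ] Euc d) : Prop := ∀ v, v ≠ 0 → ⟪S v, v⟫ < ⟪T v, v⟫

/-- `u` has (Alexandrov) derivative `p` and second derivative `S` at `θ`. -/
def HasAlexandrovAt {d : ℕ} (u : Euc d → ℝ) (p : Euc d) (S : Euc d →L[ℝ] Euc d)
    (θ : Euc d) : Prop :=
  HasGradientAt u p θ ∧
    (fun y => u y - u θ - ⟪p, y - θ⟫ - (1/2) * ⟪S (y - θ), y - θ⟫)
      =o[nhds θ] fun y => ‖y - θ‖ ^ 2

open Classical in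
/-- The Alexandrov second derivative `D²u(θ)` (junk value `0` where it does not exist). -/
def D2 {d : ℕ} (u : Euc d → ℝ) (θ : Euc d) : Euc d →L[ℝ] Euc d :=
  if h : ∃ pS : Euc d × (Euc d →L[ℝ] Euc d), HasAlexandrovAt u pS.1 pS.2 θ then h.choose.2 else 0

/-- `‖S‖ = sup_{‖v‖=1} |S(v,v)|`. -/
def qNorm {d : ℕ} (S : Euc d →L[ℝ] Euc d) : ℝ :=
  ⨆ v : (sphere (0 : Euc d) 1 : Set (Euc d)), |⟪S v.1, v.1⟫|

/-- A fundamental domain of `𝕋^d` in `ℝ^d`. -/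
def fundCube (d : ℕ) : Set (Euc d) := {x | ∀ i, x i ∈ Ico (0:ℝ) 1}

/-- The distance `d_{2,1}(u,v) = ∫_{𝕋^d} ‖D²u - D²v‖`. -/
def d21 {d : ℕ} (u v : Euc d → ℝ) : ℝ := ∫ θ in fundCube d, qNorm (D2 u θ - D2 v θ)

/-- Semi-concavity. -/
def SemiConcave {d : ℕ} (u : Euc d → ℝ) : Prop :=
  ∃ K : ℝ, ∀ x, ∃ p, ∀ y, u y ≤ u x + ⟪p, y - x⟫ + K * ‖y - x‖ ^ 2

/-- `u` is upper Green regular: at Lebesgue-a.e. `θ`, `ℋ(G₊(θ, du(θ))) = D²u(θ)`. -/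
def UpperGreenRegular {d : ℕ} (φ : ℝ → Phase d → Phase d) (u : Euc d → ℝ) : Prop :=
  ∀ᵐ θ ∂(volume : Measure (Euc d)), ∃ p S, HasGradientAt u p θ ∧
    (∀ t > (0:ℝ), ∃ S', IsHeight (GreenT φ t (θ, p)) S') ∧
    Tendsto (fun t : ℝ => heightOf (GreenT φ t (θ, p))) atTop (nhds S) ∧
    HasAlexandrovAt u p S θ

/-- The graph `𝒢(du) ⊂ T^*𝕋^d` of the differential of `u`. -/
def gradGraph {d : ℕ} (u : Euc d → ℝ) : Set (Phase d) := {x | HasGradientAt u x.2 x.1}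

/-- The graph `𝒢(η_c + du)` where `η_c` is the constant form `cf`. -/
def gradGraphShift {d : ℕ} (cf : Euc d) (u : Euc d → ℝ) : Set (Phase d) :=
  {x | ∃ p, HasGradientAt u p x.1 ∧ x.2 = cf + p}

/-- Continuity of `c ↦ H_c` for the `C²` compact-open topology. -/
def C2CompactOpenCont {d : ℕ} {C : Type*} [MetricSpace C] (Hfam : C → Phase d → ℝ) : Prop :=
  ∀ (c0 : C) (K : Set (Phase d)), IsCompact K → ∀ ε > (0:ℝ), ∃ δ > (0:ℝ), ∀ c : C,
    dist c c0 < δ → ∀ j : ℕ, j ≤ 2 → ∀ x ∈ K,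
      ‖iteratedFDeriv ℝ j (Hfam c) x - iteratedFDeriv ℝ j (Hfam c0) x‖ ≤ ε

/-- `h(t, x, c, λ) = ℋ(G_{-t}^{c,λ}(x))`, the height of `Dφ_{-t} V(φ_t x)`. -/
def hGreenMinus {d : ℕ} (φ : ℝ → Phase d → Phase d) (t : ℝ) (x : Phase d) :
    Euc d →L[ℝ] Euc d :=
  heightOf (pushV φ (-t) (φ t x))

/-- `h(-t, x, c, λ) = ℋ(G_t^{c,λ}(x))`, the height of `Dφ_t V(φ_{-t} x)`. -/
def hGreenPlus {d : ℕ} (φ : ℝ → Phase d → Phase d) (t : ℝ) (x : Phase d) :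
    Euc d →L[ℝ] Euc d :=
  heightOf (pushV φ t (φ (-t) x))

/-!
As long as there are no conjugate points, `t ↦ h(-t, y, c, λ)` is decreasing in `t > 0`, so
`h₊ ≤ h(-t, ·) ≤ h(-T, ·)` for `t ≥ T`; and for each fixed `T` the map `h(-T, ·)` is continuous.
Upper semicontinuity follows by choosing `T` with `h(-T, x, c₀, λ₀)` close to `h₊(x, c₀, λ₀)`.

For the monotonicity, `G_t(y)` is the preimage of the vertical by `Dφ_{-t}(y)`, since
`Dφ_{-t}` inverts `Dφ_t`. As `Dφ_τ` scales the symplectic form by `e^{-λτ}`, differentiating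
along the variational equation expresses the derivative of `τ ↦ ℋ(Dφ_τ(y)⁻¹ V)` as a positive
multiple of the fiberwise Hessian of `H`. Continuity at fixed `T` comes from the continuous
dependence of the variational equation on the initial point and on the vector field in the
`C¹` compact-open topology.
-/

section LinearODE

variable {F : Type*} [NormedAddCommGroup F] [NormedSpace ℝ F]

/- The a priori bound is only assumed where the conclusion holds, so that the lemma applies to
solutions of nonlinear equations as long as they stay in a tube. -/
theorem norm_le_mul_exp_of_norm_deriv_le {f f' : ℝ → F} {T m K : ℝ} (hT : 0 < T) (hK : 0 ≤ K)
    (hm : 0 < m) (hf : ∀ τ ∈ Icc (-T) T, HasDerivWithinAt f (f' τ) (Icc (-T) T) τ)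
    (h0 : ‖f 0‖ ≤ m)
    (bound : ∀ τ ∈ Icc (-T) T, ‖f τ‖ ≤ m * Real.exp ((K + 2) * T) → ‖f' τ‖ ≤ K * ‖f τ‖ + m) :
    ∀ τ ∈ Icc (-T) T, ‖f τ‖ ≤ m * Real.exp ((K + 2) * T) := by
  intro τ hτ
  have hτT : ‖τ‖ ≤ T := abs_le.2 hτ
  have hmem : ∀ r ∈ Icc (0 : ℝ) 1, r * τ ∈ Icc (-T) T := fun r hr ↦ abs_le.1 <| by
    rw [abs_mul, abs_of_nonneg hr.1]
    exact (mul_le_of_le_one_left (abs_nonneg τ) hr.2).trans hτT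
  set B : ℝ → ℝ := fun r ↦ m * Real.exp ((K + 2) * T * r)
  have hB : ∀ r, HasDerivAt B (m * (Real.exp ((K + 2) * T * r) * ((K + 2) * T))) r := fun r ↦ by
    simpa using ((hasDerivAt_id r).const_mul ((K + 2) * T)).exp.const_mul m
  have hmB : ∀ r ∈ Icc (0 : ℝ) 1, m ≤ B r := fun r hr ↦
    le_mul_of_one_le_right hm.le (Real.one_le_exp (by have := hr.1; positivity))
  have hB1 : ∀ r ∈ Icc (0 : ℝ) 1, B r ≤ m * Real.exp ((K + 2) * T) := fun r hr ↦
    mul_le_mul_of_nonneg_left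
      (Real.exp_le_exp.2 (mul_le_of_le_one_right (by positivity) hr.2)) hm.le
  have hg : ∀ r ∈ Icc (0 : ℝ) 1,
      HasDerivWithinAt (fun r ↦ f (r * τ)) (τ • f' (r * τ)) (Icc 0 1) r := fun r hr ↦
    (hf _ (hmem r hr)).scomp r (hasDerivAt_mul_const τ).hasDerivWithinAt hmem
  have hlt : ∀ r ∈ Ico (0 : ℝ) 1, ‖f (r * τ)‖ = B r →
      ‖τ • f' (r * τ)‖ < m * (Real.exp ((K + 2) * T * r) * ((K + 2) * T)) := fun r hr heq ↦ by
    have hr' := Ico_subset_Icc_self hr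
    have hmr := hmB r hr'
    calc ‖τ • f' (r * τ)‖ ≤ T * (K * B r + m) := by
          rw [norm_smul, ← heq]
          gcongr
          exact bound _ (hmem r hr') (heq.le.trans (hB1 r hr'))
      _ < T * ((K + 2) * B r) := by gcongr; linarith
      _ = m * (Real.exp ((K + 2) * T * r) * ((K + 2) * T)) := by ring
  have := image_norm_le_of_norm_deriv_right_lt_deriv_boundary' (f := fun r ↦ f (r * τ)) (B := B)
    (fun r hr ↦ (hg r hr).continuousWithinAt)
    (fun r hr ↦ (hg r (Ico_subset_Icc_self hr)).mono_of_mem_nhdsWithin (Icc_mem_nhdsGE_of_mem hr))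
    (by simpa [B] using h0) (fun r _ ↦ (hB r).continuousAt.continuousWithinAt)
    (fun r _ ↦ (hB r).hasDerivWithinAt) hlt (right_mem_Icc.2 zero_le_one)
  simpa [B] using this

/-- The radial retraction onto the closed ball of radius `R`, used to make linear vector fields
bounded. -/
def radialRetraction (R : ℝ) (w : F) : F := (R / max R ‖w‖) • w

theorem norm_radialRetraction_le {R : ℝ} (hR : 0 < R) (w : F) : ‖radialRetraction R w‖ ≤ R := by
  have hw : 0 < max R ‖w‖ := lt_max_of_lt_left hR
  rw [radialRetraction, norm_smul, Real.norm_of_nonneg (by positivity), div_mul_eq_mul_div,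
    div_le_iff₀ hw]
  gcongr
  exact le_max_right _ _

theorem radialRetraction_eq_self {R : ℝ} (hR : 0 < R) {w : F} (hw : ‖w‖ ≤ R) :
    radialRetraction R w = w := by
  rw [radialRetraction, max_eq_left hw, div_self hR.ne', one_smul]

theorem norm_radialRetraction_sub_le {R : ℝ} (hR : 0 < R) (w v : F) :
    ‖radialRetraction R w - radialRetraction R v‖ ≤ 2 * ‖w - v‖ := by
  have hw : 0 < max R ‖w‖ := lt_max_of_lt_left hR
  have hv : 0 < max R ‖v‖ := lt_max_of_lt_left hR
  have hmax : |max R ‖v‖ - max R ‖w‖| ≤ ‖w - v‖ := by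
    rw [max_comm R, max_comm R]
    exact (abs_max_sub_max_le_abs _ _ _).trans (norm_sub_rev w v ▸ abs_norm_sub_norm_le v w)
  have hscale : ‖R / max R ‖w‖‖ ≤ 1 := by
    rw [Real.norm_of_nonneg (by positivity)]
    exact div_le_one_of_le₀ (le_max_left _ _) hw.le
  have hsplit : radialRetraction R w - radialRetraction R v = (R / max R ‖w‖) • (w - v) +
      (R / max R ‖w‖ * ((max R ‖v‖ - max R ‖w‖) / max R ‖v‖)) • v := by
    have : R / max R ‖w‖ * ((max R ‖v‖ - max R ‖w‖) / max R ‖v‖) =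
        R / max R ‖w‖ - R / max R ‖v‖ := by field_simp
    rw [this, radialRetraction, radialRetraction]
    module
  calc ‖radialRetraction R w - radialRetraction R v‖
      ≤ ‖R / max R ‖w‖‖ * ‖w - v‖ +
        ‖R / max R ‖w‖‖ * (|max R ‖v‖ - max R ‖w‖| / max R ‖v‖) * ‖v‖ := by
        rw [hsplit]
        refine (norm_add_le _ _).trans_eq ?_
        rw [norm_smul, norm_smul, norm_mul, norm_div (max R ‖v‖ - max R ‖w‖),
          Real.norm_eq_abs (max R ‖v‖ - max R ‖w‖), Real.norm_of_nonneg hv.le]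
    _ ≤ 1 * ‖w - v‖ + 1 * (‖w - v‖ / max R ‖v‖) * max R ‖v‖ := by
        gcongr
        exact le_max_right _ _
    _ = 2 * ‖w - v‖ := by
        field_simp
        ring

theorem exists_isIntegralCurveOn_clm [CompleteSpace F] {A : ℝ → F →L[ℝ] F} {T : ℝ} (hT : 0 < T)
    (hA : ContinuousOn A (Icc (-T) T)) (w₀ : F) :
    ∃ w : ℝ → F, w 0 = w₀ ∧ IsIntegralCurveOn w (fun τ u ↦ A τ u) (Icc (-T) T) := by
  have h0T : (0 : ℝ) ∈ Icc (-T) T := ⟨by linarith, hT.le⟩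
  obtain ⟨K, hK⟩ := isCompact_Icc.exists_bound_of_continuousOn hA
  have hK0 : 0 ≤ K := (norm_nonneg _).trans (hK 0 h0T)
  set R : ℝ := (‖w₀‖ + 1) * Real.exp ((K + 2) * T)
  have hR : 0 < R := by positivity
  have hPL : IsPicardLindelof (fun τ u ↦ A τ (radialRetraction R u)) ⟨0, h0T⟩ w₀
      ⟨K * R * T, by positivity⟩ 0 ⟨K * R, by positivity⟩ ⟨K * 2, by positivity⟩ := by
    refine ⟨fun τ hτ ↦ LipschitzOnWith.of_dist_le_mul fun u _ v _ ↦ ?_,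
      fun u _ ↦ hA.clm_apply continuousOn_const, fun τ hτ u _ ↦ ?_, ?_⟩
    · rw [dist_eq_norm, dist_eq_norm, ← map_sub]
      refine ((A τ).le_of_opNorm_le_of_le (hK τ hτ) (norm_radialRetraction_sub_le hR u v)).trans_eq
        (mul_assoc K 2 _).symm
    · exact (A τ).le_of_opNorm_le_of_le (hK τ hτ) (norm_radialRetraction_le hR u)
    · change K * R * max (T - 0) (0 - -T) ≤ K * R * T - 0
      simp
  obtain ⟨w, hw0, hw⟩ := hPL.exists_eq_forall_mem_Icc_hasDerivWithinAt₀
  have hwR : ∀ τ ∈ Icc (-T) T, ‖w τ‖ ≤ R :=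
    norm_le_mul_exp_of_norm_deriv_le hT hK0 (by positivity) hw (by simp [hw0])
      fun τ hτ hle ↦ by
        rw [radialRetraction_eq_self hR hle]
        exact ((A τ).le_of_opNorm_le (hK τ hτ) _).trans (le_add_of_nonneg_right (by positivity))
  exact ⟨w, hw0, fun τ hτ ↦ by simpa only [radialRetraction_eq_self hR (hwR τ hτ)] using hw τ hτ⟩

end LinearODE

theorem exists_pos_forall_dist_le_of_isCompact {α β : Type*} [PseudoMetricSpace α]
    [PseudoMetricSpace β] {f : α → β} {S : Set α} (hf : Continuous f) (hS : IsCompact S) {ε : ℝ}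
    (hε : 0 < ε) : ∃ δ > 0, ∀ a ∈ S, ∀ w, dist w a ≤ δ → dist (f w) (f a) ≤ ε := by
  obtain ⟨δ, hδ, h⟩ := Metric.mem_uniformity_dist.1 <|
    hS.uniformContinuousAt_of_continuousAt f (fun a _ ↦ hf.continuousAt) (dist_mem_uniformity hε)
  refine ⟨δ / 2, half_pos hδ, fun a ha w hw ↦ ?_⟩
  rw [dist_comm] at hw ⊢
  exact (h (hw.trans_lt (half_lt_self hδ)) ha).le

section Flow

variable {E : Type*} [NormedAddCommGroup E] [NormedSpace ℝ E]

theorem exists_pos_forall_norm_sub_fderiv_le {X : E → E} (hX : ContDiff ℝ 1 X) {S : Set E}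
    (hS : IsCompact S) {ε : ℝ} (hε : 0 < ε) :
    ∃ δ > 0, ∀ a ∈ S, ∀ w, ‖w - a‖ ≤ δ → ‖X w - X a - fderiv ℝ X a (w - a)‖ ≤ ε * ‖w - a‖ := by
  obtain ⟨δ, hδ, h⟩ :=
    exists_pos_forall_dist_le_of_isCompact (hX.continuous_fderiv one_ne_zero) hS hε
  refine ⟨δ, hδ, fun a ha w hw ↦ ?_⟩
  refine (convex_closedBall a δ).norm_image_sub_le_of_norm_fderiv_le' (𝕜 := ℝ)
    (fun u _ ↦ hX.differentiable one_ne_zero u) (fun u hu ↦ ?_) (mem_closedBall_self hδ.le)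
    (mem_closedBall_iff_norm.2 hw)
  simpa only [dist_eq_norm] using h a ha u hu

theorem exists_pos_forall_norm_sub_le_of_isIntegralCurveOn {X : E → E} (hX : ContDiff ℝ 1 X)
    {z : ℝ → E} {T r : ℝ} (hT : 0 < T) (hr : 0 < r)
    (hz : IsIntegralCurveOn z (fun _ ↦ X) (Icc (-T) T)) :
    ∃ δ > 0, ∃ L > 0, ∀ m, 0 < m → m ≤ δ → ∀ (Y : E → E) (y : ℝ → E),
      IsIntegralCurveOn y (fun _ ↦ Y) (Icc (-T) T) → ‖y 0 - z 0‖ ≤ m →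
      (∀ w ∈ cthickening r (z '' Icc (-T) T), ‖Y w - X w‖ ≤ m) →
      ∀ τ ∈ Icc (-T) T, ‖y τ - z τ‖ ≤ m * L := by
  have hzc := hz.continuousOn
  obtain ⟨K, hK⟩ := isCompact_Icc.exists_bound_of_continuousOn
    ((hX.continuous_fderiv one_ne_zero).comp_continuousOn hzc)
  have hK0 : 0 ≤ K := (norm_nonneg _).trans (hK 0 ⟨by linarith, hT.le⟩)
  obtain ⟨ρ, hρ, hXρ⟩ := exists_pos_forall_norm_sub_fderiv_le hX
    (isCompact_Icc.image_of_continuousOn hzc) one_pos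
  set L := Real.exp ((K + 1 + 2) * T)
  have hL : 0 < L := Real.exp_pos _
  refine ⟨min ρ r / L, by positivity, L, hL, fun m hm hmδ Y y hy h0 hY ↦ ?_⟩
  rw [le_div_iff₀ hL] at hmδ
  refine norm_le_mul_exp_of_norm_deriv_le hT (by positivity) hm
    (fun τ hτ ↦ (hy τ hτ).sub (hz τ hτ)) h0 fun τ hτ hle ↦ ?_
  have hzτ := mem_image_of_mem z hτ
  have htube : ‖Y (y τ) - X (y τ)‖ ≤ m := hY _ <| mem_cthickening_of_dist_le _ _ _ _ hzτ <| by
    rw [dist_eq_norm]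
    exact hle.trans (hmδ.trans (min_le_right _ _))
  have hremainder := hXρ _ hzτ (y τ) (hle.trans (hmδ.trans (min_le_left _ _)))
  have hlinear := (fderiv ℝ X (z τ)).le_of_opNorm_le (hK τ hτ) (y τ - z τ)
  calc ‖Y (y τ) - X (z τ)‖
      = ‖(Y (y τ) - X (y τ)) + (X (y τ) - X (z τ) - fderiv ℝ X (z τ) (y τ - z τ)) +
          fderiv ℝ X (z τ) (y τ - z τ)‖ := by congr 1; abel
    _ ≤ m + 1 * ‖y τ - z τ‖ + K * ‖y τ - z τ‖ := norm_add₃_le.trans (by gcongr)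
    _ = (K + 1) * ‖y τ - z τ‖ + m := by ring

theorem norm_sub_sub_le_of_linearization {X : E → E} {A : ℝ → E →L[ℝ] E} {u z w : ℝ → E}
    {T K m : ℝ} (hT : 0 < T) (hK : 0 ≤ K) (hm : 0 < m)
    (hu : IsIntegralCurveOn u (fun _ ↦ X) (Icc (-T) T))
    (hz : IsIntegralCurveOn z (fun _ ↦ X) (Icc (-T) T))
    (hw : IsIntegralCurveOn w (fun τ v ↦ A τ v) (Icc (-T) T)) (h0 : w 0 = u 0 - z 0)
    (hA : ∀ τ ∈ Icc (-T) T, ‖A τ‖ ≤ K)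
    (hremainder : ∀ τ ∈ Icc (-T) T, ‖X (u τ) - X (z τ) - A τ (u τ - z τ)‖ ≤ m) :
    ∀ τ ∈ Icc (-T) T, ‖u τ - z τ - w τ‖ ≤ m * Real.exp ((K + 2) * T) := by
  refine norm_le_mul_exp_of_norm_deriv_le hT hK hm
    (fun τ hτ ↦ ((hu τ hτ).sub (hz τ hτ)).sub (hw τ hτ)) (by simp [h0, hm.le]) fun τ hτ _ ↦ ?_
  calc ‖X (u τ) - X (z τ) - A τ (w τ)‖
      = ‖A τ (u τ - z τ - w τ) + (X (u τ) - X (z τ) - A τ (u τ - z τ))‖ := by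
        rw [map_sub (A τ) (u τ - z τ)]; congr 1; abel
    _ ≤ K * ‖u τ - z τ - w τ‖ + m :=
        norm_add_le_of_le ((A τ).le_of_opNorm_le (hA τ hτ) _) (hremainder τ hτ)

theorem hasFDerivAt_flow_of_isIntegralCurveOn {X : E → E} (hX : ContDiff ℝ 1 X) {φ : ℝ → E → E}
    {T : ℝ} (hT : 0 < T) (h0 : ∀ u, φ 0 u = u)
    (hφ : ∀ u, IsIntegralCurveOn (fun τ ↦ φ τ u) (fun _ ↦ X) (Icc (-T) T)) {y : E}
    {W : ℝ → E →L[ℝ] E} (hW0 : W 0 = ContinuousLinearMap.id ℝ E)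
    (hW : IsIntegralCurveOn W (fun τ L ↦ fderiv ℝ X (φ τ y) ∘L L) (Icc (-T) T)) {τ : ℝ}
    (hτ : τ ∈ Icc (-T) T) : HasFDerivAt (φ τ) (W τ) y := by
  have hyc := (hφ y).continuousOn
  obtain ⟨K, hK⟩ := isCompact_Icc.exists_bound_of_continuousOn
    ((hX.continuous_fderiv one_ne_zero).comp_continuousOn hyc)
  have hK0 : 0 ≤ K := (norm_nonneg _).trans (hK 0 ⟨by linarith, hT.le⟩)
  obtain ⟨δ, hδ, L, hL, hclose⟩ :=
    exists_pos_forall_norm_sub_le_of_isIntegralCurveOn hX hT one_pos (hφ y)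
  rw [hasFDerivAt_iff_isLittleO, isLittleO_iff]
  intro c hc
  set M := Real.exp ((K + 2) * T)
  have hM : 0 < M := Real.exp_pos _
  obtain ⟨ρ, hρ, hXρ⟩ := exists_pos_forall_norm_sub_fderiv_le hX
    (isCompact_Icc.image_of_continuousOn hyc) (show 0 < c / (M * L) by positivity)
  filter_upwards [Metric.ball_mem_nhds y (show 0 < min δ (ρ / L) by positivity)] with u hu
  rw [mem_ball, dist_eq_norm, lt_min_iff, lt_div_iff₀ hL] at hu
  rcases eq_or_ne u y with rfl | huy
  · simp
  have hpos : 0 < ‖u - y‖ := norm_pos_iff.2 (sub_ne_zero.2 huy)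
  have hdist : ∀ s ∈ Icc (-T) T, ‖φ s u - φ s y‖ ≤ ‖u - y‖ * L :=
    hclose _ hpos hu.1.le X (fun s ↦ φ s u) (hφ u) (by simp [h0]) (by simp)
  have hw : IsIntegralCurveOn (fun s ↦ W s (u - y)) (fun s v ↦ fderiv ℝ X (φ s y) v)
      (Icc (-T) T) := fun s hs ↦ by
    simpa using (hW s hs).clm_apply (hasDerivWithinAt_const s _ (u - y))
  refine (norm_sub_sub_le_of_linearization (m := c / (M * L) * (‖u - y‖ * L)) hT hK0
    (by positivity) (hφ u) (hφ y) hw (by simp [h0, hW0]) hK (fun s hs ↦ ?_) τ hτ).trans_eq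
    (by change c / (M * L) * (‖u - y‖ * L) * M = _; field_simp)
  refine (hXρ _ (mem_image_of_mem _ hs) (φ s u) ((hdist s hs).trans hu.2.le)).trans ?_
  gcongr
  exact hdist s hs

variable {X : E → E} {φ : ℝ → E → E}

theorem exists_isIntegralCurveOn_hasFDerivAt_flow [CompleteSpace E] (hX : ContDiff ℝ 1 X)
    (h0 : ∀ u, φ 0 u = u) (hφ : ∀ u, IsIntegralCurve (fun τ ↦ φ τ u) (fun _ ↦ X)) (y : E) {T : ℝ}
    (hT : 0 < T) :
    ∃ W : ℝ → E →L[ℝ] E,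
      IsIntegralCurveOn W (fun τ L ↦ fderiv ℝ X (φ τ y) ∘L L) (Icc (-T) T) ∧
      ∀ τ ∈ Icc (-T) T, HasFDerivAt (φ τ) (W τ) y := by
  have hA : Continuous fun τ ↦ ContinuousLinearMap.compL ℝ E E E (fderiv ℝ X (φ τ y)) :=
    (ContinuousLinearMap.continuous _).comp <|
      (hX.continuous_fderiv one_ne_zero).comp (hφ y).continuous
  obtain ⟨W, hW0, hW⟩ := exists_isIntegralCurveOn_clm hT hA.continuousOn (.id ℝ E)
  exact ⟨W, hW, fun τ hτ ↦ hasFDerivAt_flow_of_isIntegralCurveOn hX hT h0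
    (fun u ↦ (hφ u).isIntegralCurveOn _) hW0 hW hτ⟩

theorem differentiable_flow [CompleteSpace E] (hX : ContDiff ℝ 1 X) (h0 : ∀ u, φ 0 u = u)
    (hφ : ∀ u, IsIntegralCurve (fun τ ↦ φ τ u) (fun _ ↦ X)) (t : ℝ) : Differentiable ℝ (φ t) :=
  fun y ↦
    have ⟨_, _, hW⟩ :=
      exists_isIntegralCurveOn_hasFDerivAt_flow hX h0 hφ y (by positivity : 0 < |t| + 1)
    (hW t (abs_le.1 (by linarith))).differentiableAt

theorem isIntegralCurve_fderiv_flow [CompleteSpace E] (hX : ContDiff ℝ 1 X)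
    (h0 : ∀ u, φ 0 u = u) (hφ : ∀ u, IsIntegralCurve (fun τ ↦ φ τ u) (fun _ ↦ X)) (y : E) :
    IsIntegralCurve (fun τ ↦ fderiv ℝ (φ τ) y) (fun τ L ↦ fderiv ℝ X (φ τ y) ∘L L) := fun t ↦ by
  obtain ⟨W, hW, hφW⟩ :=
    exists_isIntegralCurveOn_hasFDerivAt_flow hX h0 hφ y (by positivity : 0 < |t| + 1)
  have hfderiv : ∀ τ ∈ Icc (-(|t| + 1)) (|t| + 1), fderiv ℝ (φ τ) y = W τ :=
    fun τ hτ ↦ (hφW τ hτ).fderiv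
  have ht : t ∈ Ioo (-(|t| + 1)) (|t| + 1) := abs_lt.1 (lt_add_one _)
  have hmem := Icc_mem_nhds ht.1 ht.2
  have ht' := Ioo_subset_Icc_self ht
  simpa only [hfderiv t ht'] using ((hW t ht').congr hfderiv (hfderiv t ht')).hasDerivAt hmem

end Flow

section ContinuousDependence

variable {E F ι : Type*} [NormedAddCommGroup E] [NormedSpace ℝ E] [NormedAddCommGroup F]
  [NormedSpace ℝ F] {l : Filter ι}

theorem tendstoUniformlyOn_comp_of_cthickening {α β γ : Type*} [PseudoMetricSpace β]
    [PseudoMetricSpace γ] {fs : ι → β → γ} {f : β → γ} {zs : ι → α → β} {z : α → β} {s : Set α}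
    {r : ℝ} (hr : 0 < r) (hf : Continuous f) (hs : IsCompact (z '' s))
    (hfs : TendstoUniformlyOn fs f l (cthickening r (z '' s)))
    (hzs : TendstoUniformlyOn zs z l s) :
    TendstoUniformlyOn (fun i a ↦ fs i (zs i a)) (fun a ↦ f (z a)) l s := by
  rw [Metric.tendstoUniformlyOn_iff] at hfs hzs ⊢
  intro ε hε
  obtain ⟨δ, hδ, hfδ⟩ := exists_pos_forall_dist_le_of_isCompact hf hs (half_pos hε)
  filter_upwards [hfs _ (half_pos hε), hzs _ (lt_min hδ hr)] with i hfi hzi a ha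
  have hza := mem_image_of_mem z ha
  have hdist : dist (zs i a) (z a) ≤ min δ r := (dist_comm (z a) _ ▸ hzi a ha).le
  have htube : zs i a ∈ cthickening r (z '' s) :=
    mem_cthickening_of_dist_le _ _ _ _ hza (hdist.trans (min_le_right _ _))
  calc dist (f (z a)) (fs i (zs i a))
      ≤ dist (f (z a)) (f (zs i a)) + dist (f (zs i a)) (fs i (zs i a)) := dist_triangle _ _ _
    _ < ε / 2 + ε / 2 := by
        refine add_lt_add_of_le_of_lt ?_ (hfi _ htube)
        rw [dist_comm]
        exact hfδ _ hza _ (hdist.trans (min_le_left _ _))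
    _ = ε := add_halves ε

theorem tendstoUniformlyOn_of_isIntegralCurveOn {X : E → E} (hX : ContDiff ℝ 1 X) {z : ℝ → E}
    {T r : ℝ} (hT : 0 < T) (hr : 0 < r) (hz : IsIntegralCurveOn z (fun _ ↦ X) (Icc (-T) T))
    {Xs : ι → E → E} {zs : ι → ℝ → E}
    (hzs : ∀ i, IsIntegralCurveOn (zs i) (fun _ ↦ Xs i) (Icc (-T) T))
    (h0 : Tendsto (fun i ↦ zs i 0) l (nhds (z 0)))
    (hXs : TendstoUniformlyOn Xs X l (cthickening r (z '' Icc (-T) T))) :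
    TendstoUniformlyOn zs z l (Icc (-T) T) := by
  obtain ⟨δ, hδ, L, hL, hclose⟩ := exists_pos_forall_norm_sub_le_of_isIntegralCurveOn hX hT hr hz
  rw [Metric.tendstoUniformlyOn_iff] at hXs ⊢
  intro ε hε
  set m := min δ (ε / 2 / L)
  have hm : 0 < m := by positivity
  filter_upwards [hXs m hm, Metric.tendsto_nhds.1 h0 m hm] with i hXi hi τ hτ
  rw [dist_comm, dist_eq_norm]
  rw [dist_eq_norm] at hi
  calc ‖zs i τ - z τ‖ ≤ m * L := hclose m hm (min_le_left _ _) (Xs i) (zs i) (hzs i) hi.le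
        (fun w hw ↦ by simpa only [dist_eq_norm, norm_sub_rev (X w)] using (hXi w hw).le) τ hτ
    _ ≤ ε / 2 / L * L := by gcongr; exact min_le_right _ _
    _ < ε := by rw [div_mul_cancel₀ _ hL.ne']; exact half_lt_self hε

theorem norm_sub_le_of_isIntegralCurveOn_clm {A A' : ℝ → F →L[ℝ] F} {w w' : ℝ → F} {T K m : ℝ}
    (hT : 0 < T) (hK : 0 ≤ K) (hm : 0 < m)
    (hw : IsIntegralCurveOn w (fun τ u ↦ A τ u) (Icc (-T) T))
    (hw' : IsIntegralCurveOn w' (fun τ u ↦ A' τ u) (Icc (-T) T)) (h0 : ‖w' 0 - w 0‖ ≤ m)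
    (hA' : ∀ τ ∈ Icc (-T) T, ‖A' τ‖ ≤ K) (hAA' : ∀ τ ∈ Icc (-T) T, ‖(A' τ - A τ) (w τ)‖ ≤ m) :
    ∀ τ ∈ Icc (-T) T, ‖w' τ - w τ‖ ≤ m * Real.exp ((K + 2) * T) :=
  norm_le_mul_exp_of_norm_deriv_le hT hK hm (fun τ hτ ↦ (hw' τ hτ).sub (hw τ hτ)) h0
    fun τ hτ _ ↦ calc
      ‖A' τ (w' τ) - A τ (w τ)‖ = ‖A' τ (w' τ - w τ) + (A' τ - A τ) (w τ)‖ := by simp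
      _ ≤ K * ‖w' τ - w τ‖ + m :=
        norm_add_le_of_le ((A' τ).le_of_opNorm_le (hA' τ hτ) _) (hAA' τ hτ)

theorem tendstoUniformlyOn_of_isIntegralCurveOn_clm {A : ℝ → F →L[ℝ] F} {w : ℝ → F} {T : ℝ}
    (hT : 0 < T) (hA : ContinuousOn A (Icc (-T) T))
    (hw : IsIntegralCurveOn w (fun τ u ↦ A τ u) (Icc (-T) T))
    {As : ι → ℝ → F →L[ℝ] F} {ws : ι → ℝ → F}
    (hws : ∀ i, IsIntegralCurveOn (ws i) (fun τ u ↦ As i τ u) (Icc (-T) T))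
    (h0 : Tendsto (fun i ↦ ws i 0) l (nhds (w 0)))
    (hAs : TendstoUniformlyOn As A l (Icc (-T) T)) :
    TendstoUniformlyOn ws w l (Icc (-T) T) := by
  have h0T : (0 : ℝ) ∈ Icc (-T) T := ⟨by linarith, hT.le⟩
  obtain ⟨K, hK⟩ := isCompact_Icc.exists_bound_of_continuousOn hA
  obtain ⟨N, hN⟩ := isCompact_Icc.exists_bound_of_continuousOn hw.continuousOn
  have hK0 : 0 ≤ K := (norm_nonneg _).trans (hK 0 h0T)
  have hN0 : 0 ≤ N := (norm_nonneg _).trans (hN 0 h0T)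
  rw [Metric.tendstoUniformlyOn_iff] at hAs ⊢
  intro ε hε
  set L := Real.exp ((K + 1 + 2) * T)
  have hL : 0 < L := Real.exp_pos _
  set m := ε / 2 / L
  have hm : 0 < m := by positivity
  filter_upwards [hAs (min 1 (m / (N + 1))) (by positivity), Metric.tendsto_nhds.1 h0 m hm]
    with i hAi hi τ hτ
  have hdiff : ∀ s ∈ Icc (-T) T, ‖As i s - A s‖ ≤ min 1 (m / (N + 1)) := fun s hs ↦ by
    simpa only [dist_eq_norm, norm_sub_rev (A s)] using (hAi s hs).le
  have hbound : ∀ s ∈ Icc (-T) T, ‖As i s‖ ≤ K + 1 := fun s hs ↦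
    (norm_le_norm_add_norm_sub' _ (A s)).trans
      (add_le_add (hK s hs) ((hdiff s hs).trans (min_le_left _ _)))
  have hforcing : ∀ s ∈ Icc (-T) T, ‖(As i s - A s) (w s)‖ ≤ m := fun s hs ↦ calc
    ‖(As i s - A s) (w s)‖ ≤ m / (N + 1) * (N + 1) :=
      (As i s - A s).le_of_opNorm_le_of_le ((hdiff s hs).trans (min_le_right _ _))
        ((hN s hs).trans (le_add_of_nonneg_right zero_le_one))
    _ = m := div_mul_cancel₀ _ (by positivity)
  rw [dist_comm, dist_eq_norm]
  calc ‖ws i τ - w τ‖ ≤ ε / 2 / L * L := norm_sub_le_of_isIntegralCurveOn_clm hT (by positivity)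
        hm hw (hws i) (dist_eq_norm (ws i 0) _ ▸ hi.le) hbound hforcing τ hτ
    _ < ε := by rw [div_mul_cancel₀ _ hL.ne']; exact half_lt_self hε

theorem tendsto_fderiv_flow [ProperSpace E] {X : E → E} {Xs : ι → E → E} {φ : ℝ → E → E}
    {φs : ι → ℝ → E → E} {y : E} {ys : ι → E} (hX : ContDiff ℝ 1 X)
    (hXs : ∀ i, ContDiff ℝ 1 (Xs i)) (h0 : ∀ u, φ 0 u = u) (h0s : ∀ i u, φs i 0 u = u)
    (hφ : ∀ u, IsIntegralCurve (fun τ ↦ φ τ u) (fun _ ↦ X))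
    (hφs : ∀ i u, IsIntegralCurve (fun τ ↦ φs i τ u) (fun _ ↦ Xs i))
    (hys : Tendsto ys l (nhds y)) (hlim : TendstoLocallyUniformly Xs X l)
    (hlim' : TendstoLocallyUniformly (fun i ↦ fderiv ℝ (Xs i)) (fderiv ℝ X) l) (t : ℝ) :
    Tendsto (fun i ↦ fderiv ℝ (φs i t) (ys i)) l (nhds (fderiv ℝ (φ t) y)) := by
  have hT : 0 < |t| + 1 := by positivity
  set I := Icc (-(|t| + 1)) (|t| + 1)
  have hdX : Continuous (fderiv ℝ X) := hX.continuous_fderiv one_ne_zero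
  have hQ : IsCompact ((fun τ ↦ φ τ y) '' I) := isCompact_Icc.image (hφ y).continuous
  have huniform := tendstoLocallyUniformly_iff_forall_isCompact.1 hlim _ (hQ.cthickening (r := 1))
  have huniform' := tendstoLocallyUniformly_iff_forall_isCompact.1 hlim' _ (hQ.cthickening (r := 1))
  have hcurves : TendstoUniformlyOn (fun i τ ↦ φs i τ (ys i)) (fun τ ↦ φ τ y) l I :=
    tendstoUniformlyOn_of_isIntegralCurveOn hX hT one_pos ((hφ y).isIntegralCurveOn _)
      (fun i ↦ (hφs i (ys i)).isIntegralCurveOn _) (by simpa only [h0, h0s] using hys) huniform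
  have hfields := tendstoUniformlyOn_comp_of_cthickening one_pos hdX hQ huniform' hcurves
  have hid : ∀ {ψ : ℝ → E → E}, (∀ u, ψ 0 u = u) → ∀ u, fderiv ℝ (ψ 0) u = .id ℝ E :=
    fun {ψ} hψ u ↦ by rw [show ψ 0 = id from funext hψ, fderiv_id]
  refine (tendstoUniformlyOn_of_isIntegralCurveOn_clm hT
    (A := fun τ ↦ ContinuousLinearMap.compL ℝ E E E (fderiv ℝ X (φ τ y)))
    (As := fun i τ ↦ ContinuousLinearMap.compL ℝ E E E (fderiv ℝ (Xs i) (φs i τ (ys i))))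
    ?_ ((isIntegralCurve_fderiv_flow hX h0 hφ y).isIntegralCurveOn _)
    (fun i ↦ (isIntegralCurve_fderiv_flow (hXs i) (h0s i) (hφs i) (ys i)).isIntegralCurveOn _)
    ?_ ?_).tendsto_at (abs_le.1 (lt_add_one |t|).le)
  · exact (ContinuousLinearMap.continuous _).comp_continuousOn
      (hdX.comp (hφ y).continuous).continuousOn
  · simpa only [hid h0, hid (h0s _)] using tendsto_const_nhds
  · exact (ContinuousLinearMap.uniformContinuous _).comp_tendstoUniformlyOn hfields

end ContinuousDependence

section VerticalBlock

variable {V : Type*} [NormedAddCommGroup V] [NormedSpace ℝ V]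

theorem bilin_apply_of_hasDerivAt_clm {Ω : V →L[ℝ] V →L[ℝ] ℝ} {B W : ℝ → V →L[ℝ] V} {μ : ℝ}
    (hB : ∀ τ u v, Ω (B τ u) v + Ω u (B τ v) = μ * Ω u v)
    (hW : ∀ τ, HasDerivAt W (B τ ∘L W τ) τ) (hW0 : W 0 = .id ℝ V) (τ : ℝ) (u v : V) :
    Ω (W τ u) (W τ v) = Real.exp (μ * τ) * Ω u v := by
  have happly : ∀ σ u, HasDerivAt (fun σ ↦ W σ u) (B σ (W σ u)) σ := fun σ u ↦ by
    simpa using (hW σ).clm_apply (hasDerivAt_const σ u)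
  have hform : ∀ σ, HasDerivAt (fun σ ↦ Ω (W σ u) (W σ v)) (μ * Ω (W σ u) (W σ v)) σ := fun σ ↦ by
    simpa [hB] using (Ω.hasFDerivAt.comp_hasDerivAt σ (happly σ u)).clm_apply (happly σ v)
  have hexp : ∀ σ, HasDerivAt (fun σ ↦ Real.exp (-μ * σ)) (Real.exp (-μ * σ) * -μ) σ := fun σ ↦ by
    simpa using ((hasDerivAt_id σ).const_mul (-μ)).exp
  have hderiv : ∀ σ, HasDerivAt (fun σ ↦ Real.exp (-μ * σ) * Ω (W σ u) (W σ v)) 0 σ := fun σ ↦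
    ((hexp σ).fun_mul (hform σ)).congr_deriv (by ring)
  have hconst := is_const_of_deriv_eq_zero (fun σ ↦ (hderiv σ).differentiableAt)
    (fun σ ↦ (hderiv σ).deriv) τ 0
  simp only [hW0, mul_zero, Real.exp_zero, one_mul, ContinuousLinearMap.id_apply] at hconst
  rw [← hconst, ← mul_assoc, ← Real.exp_add, neg_mul, add_neg_cancel, Real.exp_zero, one_mul]

/-- The block of `M` sending the vertical factor to the horizontal one: it is invertible exactly
when the preimage of the vertical `0 × V` by `M` is transverse to the vertical. -/
def vertBlock (M : V × V →L[ℝ] V × V) : V →L[ℝ] V := .fst ℝ V V ∘L M ∘L .inr ℝ V V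

/-- The operator whose graph is the preimage of the vertical `0 × V` by `M`. It has this meaning
only when `vertBlock M` is invertible. -/
def pullbackHeight (M : V × V →L[ℝ] V × V) : V →L[ℝ] V :=
  -(Ring.inverse (vertBlock M) * (.fst ℝ V V ∘L M ∘L .inl ℝ V V))

theorem fst_apply_eq_zero_iff_of_isUnit_vertBlock {M : V × V →L[ℝ] V × V}
    (hM : IsUnit (vertBlock M)) (v p : V) : (M (v, p)).1 = 0 ↔ p = pullbackHeight M v := by
  have hsplit : (M (v, p)).1 = (M (v, 0)).1 + vertBlock M p := by
    simpa [vertBlock] using congrArg Prod.fst (map_add M (v, 0) (0, p))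
  have hleft : ∀ w, Ring.inverse (vertBlock M) (vertBlock M w) = w := fun w ↦
    congrArg (fun L : V →L[ℝ] V ↦ L w) (Ring.inverse_mul_cancel _ hM)
  have hright : ∀ w, vertBlock M (Ring.inverse (vertBlock M) w) = w := fun w ↦
    congrArg (fun L : V →L[ℝ] V ↦ L w) (Ring.mul_inverse_cancel _ hM)
  have hheight : pullbackHeight M v = -Ring.inverse (vertBlock M) (M (v, 0)).1 := rfl
  rw [hsplit, hheight]
  constructor
  · intro h
    rw [← hleft p, eq_neg_of_add_eq_zero_right h, map_neg]
  · rintro rfl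
    rw [map_neg, hright, add_neg_cancel]

variable [CompleteSpace V]

theorem differentiableAt_pullbackHeight {M : V × V →L[ℝ] V × V} (hM : IsUnit (vertBlock M)) :
    DifferentiableAt ℝ pullbackHeight M := by
  have hblock : DifferentiableAt ℝ vertBlock M := by
    unfold vertBlock
    fun_prop
  have hinv : DifferentiableAt ℝ (fun M : V × V →L[ℝ] V × V ↦ Ring.inverse (vertBlock M)) M :=
    (differentiableAt_inverse hM).comp M hblock
  exact (hinv.mul (by fun_prop)).neg

theorem eventually_isUnit_vertBlock {M : V × V →L[ℝ] V × V} (hM : IsUnit (vertBlock M)) :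
    ∀ᶠ N in nhds M, IsUnit (vertBlock N) := by
  have hblock : Continuous (vertBlock (V := V)) := by
    unfold vertBlock
    fun_prop
  exact hblock.continuousAt.eventually (Units.isOpen.mem_nhds hM)

theorem exists_hasDerivAt_pullbackHeight_apply {W : ℝ → V × V →L[ℝ] V × V}
    {B : V × V →L[ℝ] V × V} {τ : ℝ} (hW : HasDerivAt W (B ∘L W τ) τ)
    (hu : IsUnit (vertBlock (W τ))) (v : V) :
    ∃ p', HasDerivAt (fun σ ↦ pullbackHeight (W σ) v) p' τ ∧
      (B (W τ (v, pullbackHeight (W τ) v))).1 + (W τ (0, p')).1 = 0 := by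
  have hvertical : ∀ᶠ σ in nhds τ, (W σ (v, pullbackHeight (W σ) v)).1 = 0 :=
    (hW.continuousAt.eventually (eventually_isUnit_vertBlock hu)).mono fun σ hσ ↦
      (fst_apply_eq_zero_iff_of_isUnit_vertBlock hσ v _).2 rfl
  obtain ⟨p', hp'⟩ : ∃ p', HasDerivAt (fun σ ↦ pullbackHeight (W σ) v) p' τ :=
    ⟨_, (((differentiableAt_pullbackHeight hu).comp τ hW.differentiableAt).clm_apply
      (differentiableAt_const v)).hasDerivAt⟩
  have hcurve := (ContinuousLinearMap.fst ℝ V V).hasFDerivAt.comp_hasDerivAt τ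
    (hW.clm_apply ((hasDerivAt_const τ v).prodMk hp'))
  exact ⟨p', hp', hcurve.unique ((hasDerivAt_const τ 0).congr_of_eventuallyEq hvertical)⟩

end VerticalBlock

section Symplectic

variable {E : Type*} [NormedAddCommGroup E] [InnerProductSpace ℝ E]

/-- The standard symplectic form on `E × E`, as a bilinear map. -/
def symplecticForm : E × E →L[ℝ] E × E →L[ℝ] ℝ :=
  (innerSL ℝ).bilinearComp (.fst ℝ E E) (.snd ℝ E E) -
    (innerSL ℝ).bilinearComp (.snd ℝ E E) (.fst ℝ E E)

theorem symplecticForm_apply (u v : E × E) :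
    symplecticForm u v = ⟪u.1, v.2⟫ - ⟪u.2, v.1⟫ := rfl

theorem symplecticForm_antisymm (u v : E × E) : symplecticForm u v = -symplecticForm v u := by
  rw [symplecticForm_apply, symplecticForm_apply, real_inner_comm u.1, real_inner_comm u.2]
  ring

theorem inner_pullbackHeight_comm {M : E × E →L[ℝ] E × E} {c : ℝ} (hM : IsUnit (vertBlock M))
    (hc : c ≠ 0) (hω : ∀ u v, symplecticForm (M u) (M v) = c * symplecticForm u v) (v w : E) :
    ⟪pullbackHeight M v, w⟫ = ⟪v, pullbackHeight M w⟫ := by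
  have hvertical : ∀ v, (M (v, pullbackHeight M v)).1 = 0 := fun v ↦
    (fst_apply_eq_zero_iff_of_isUnit_vertBlock hM v _).2 rfl
  have h := hω (v, pullbackHeight M v) (w, pullbackHeight M w)
  rw [symplecticForm_apply, hvertical, hvertical, inner_zero_left, inner_zero_right, sub_zero] at h
  exact (sub_eq_zero.1 ((mul_eq_zero.1 h.symm).resolve_left hc)).symm

variable [CompleteSpace E]

/-- The symplectic gradient, dual to `symplecticForm`. -/
def symplecticGradient : (E × E →L[ℝ] ℝ) →L[ℝ] E × E :=
  let riesz : (E →L[ℝ] ℝ) →L[ℝ] E :=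
    ((InnerProductSpace.toDual ℝ E).symm.toContinuousLinearEquiv : (E →L[ℝ] ℝ) →L⋆[ℝ] E)
  (riesz ∘L ContinuousLinearMap.precomp ℝ (.inr ℝ E E)).prod
    (-(riesz ∘L ContinuousLinearMap.precomp ℝ (.inl ℝ E E)))

theorem symplecticGradient_apply (l : E × E →L[ℝ] ℝ) :
    symplecticGradient l = ((InnerProductSpace.toDual ℝ E).symm (l ∘L .inr ℝ E E),
      -(InnerProductSpace.toDual ℝ E).symm (l ∘L .inl ℝ E E)) := rfl

theorem inner_symplecticGradient_fst (l : E × E →L[ℝ] ℝ) (w : E) :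
    ⟪(symplecticGradient l).1, w⟫ = l (0, w) := by
  simp [symplecticGradient_apply]

theorem symplecticForm_symplecticGradient (l : E × E →L[ℝ] ℝ) (v : E × E) :
    symplecticForm (symplecticGradient l) v = l v := by
  have hsplit : v = (0, v.2) + (v.1, 0) := by simp
  conv_rhs => rw [hsplit, map_add]
  simp [symplecticForm_apply, symplecticGradient_apply]

/- The Riccati equation, written along the vector that `W τ` sends to the vertical: only the block
of `B` from the vertical to the horizontal factor survives. -/
theorem hasDerivAt_inner_pullbackHeight {W : ℝ → E × E →L[ℝ] E × E} {B : E × E →L[ℝ] E × E}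
    {τ c : ℝ} (hW : HasDerivAt W (B ∘L W τ) τ) (hu : IsUnit (vertBlock (W τ))) (hc : c ≠ 0)
    (hω : ∀ u v, symplecticForm (W τ u) (W τ v) = c * symplecticForm u v) (v : E) :
    HasDerivAt (fun σ ↦ ⟪pullbackHeight (W σ) v, v⟫)
      (⟪(W τ (v, pullbackHeight (W τ) v)).2, (B (0, (W τ (v, pullbackHeight (W τ) v)).2)).1⟫ / c)
      τ := by
  obtain ⟨p', hp', hvelocity⟩ := exists_hasDerivAt_pullbackHeight_apply hW hu v
  obtain ⟨w, hw⟩ : ∃ w, W τ (v, pullbackHeight (W τ) v) = (0, w) :=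
    ⟨_, Prod.ext ((fst_apply_eq_zero_iff_of_isUnit_vertBlock hu v _).2 rfl) rfl⟩
  rw [hw] at hvelocity
  have hform : ⟪w, (B (0, w)).1⟫ = c * ⟪p', v⟫ := by
    have h := hω (v, pullbackHeight (W τ) v) (0, p')
    rw [hw, symplecticForm_apply, symplecticForm_apply] at h
    simpa [eq_neg_of_add_eq_zero_right hvelocity, real_inner_comm v] using h
  rw [hw, hform, mul_div_cancel_left₀ _ hc]
  simpa using hp'.inner ℝ (hasDerivAt_const τ v)

end Symplectic

section ConformalField

variable {d : ℕ} {H : Phase d → ℝ} {lam : ℝ}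

theorem hamVF_eq_symplecticGradient (hH : Differentiable ℝ H) :
    hamVF H lam = fun x ↦ symplecticGradient (fderiv ℝ H x) -
      lam • (ContinuousLinearMap.inr ℝ (Euc d) (Euc d) ∘L .snd ℝ (Euc d) (Euc d)) x := by
  funext ⟨q, p⟩
  have hp : HasFDerivAt (fun p' ↦ H (q, p')) (fderiv ℝ H (q, p) ∘L .inr ℝ _ _) p :=
    (hH (q, p)).hasFDerivAt.comp p (hasFDerivAt_prodMk_right q p)
  have hq : HasFDerivAt (fun q' ↦ H (q', p)) (fderiv ℝ H (q, p) ∘L .inl ℝ _ _) q :=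
    (hH (q, p)).hasFDerivAt.comp q (hasFDerivAt_prodMk_left q p)
  rw [hamVF, gradient, gradient, hp.fderiv, hq.fderiv, symplecticGradient_apply]
  ext <;> simp

theorem contDiff_hamVF (hH : ContDiff ℝ 2 H) : ContDiff ℝ 1 (hamVF H lam) := by
  rw [hamVF_eq_symplecticGradient (hH.differentiable two_ne_zero)]
  have hdH : ContDiff ℝ 1 (fderiv ℝ H) := hH.fderiv_right one_add_one_eq_two.le
  exact ((symplecticGradient (E := Euc d)).contDiff.comp hdH).sub
    ((ContinuousLinearMap.contDiff _).const_smul lam)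

theorem fderiv_hamVF (hH : ContDiff ℝ 2 H) (x : Phase d) :
    fderiv ℝ (hamVF H lam) x = symplecticGradient ∘L fderiv ℝ (fderiv ℝ H) x -
      lam • (ContinuousLinearMap.inr ℝ (Euc d) (Euc d) ∘L .snd ℝ (Euc d) (Euc d)) := by
  have hdiff : DifferentiableAt ℝ (fderiv ℝ H) x :=
    (hH.fderiv_right one_add_one_eq_two.le).differentiable one_ne_zero x
  rw [hamVF_eq_symplecticGradient (hH.differentiable two_ne_zero)]
  exact (((symplecticGradient (E := Euc d)).hasFDerivAt.comp x hdiff.hasFDerivAt).fun_sub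
    ((ContinuousLinearMap.hasFDerivAt _).const_smul lam)).fderiv

theorem symplecticForm_fderiv_hamVF (hH : ContDiff ℝ 2 H) (x u v : Phase d) :
    symplecticForm (fderiv ℝ (hamVF H lam) x u) v + symplecticForm u (fderiv ℝ (hamVF H lam) x v) =
      -lam * symplecticForm u v := by
  have hsymm : fderiv ℝ (fderiv ℝ H) x u v = fderiv ℝ (fderiv ℝ H) x v u :=
    hH.contDiffAt.isSymmSndFDerivAt (by simp) u v
  rw [symplecticForm_antisymm u (fderiv ℝ (hamVF H lam) x v), fderiv_hamVF hH]
  simp only [sub_apply, smul_apply, map_sub, map_smul, ContinuousLinearMap.comp_apply,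
    symplecticForm_symplecticGradient, hsymm]
  simp [symplecticForm_apply, real_inner_comm u.1 v.2]
  ring

theorem inner_fderiv_hamVF_vertical (hH : ContDiff ℝ 2 H) (x : Phase d) (w : Euc d) :
    ⟪w, (fderiv ℝ (hamVF H lam) x (0, w)).1⟫ =
      iteratedFDeriv ℝ 2 (fun p ↦ H (x.1, p)) x.2 ![w, w] := by
  have hH' : ContDiff ℝ 1 (fderiv ℝ H) := hH.fderiv_right one_add_one_eq_two.le
  have hfiber : fderiv ℝ (fun p ↦ H (x.1, p)) = fun p ↦ fderiv ℝ H (x.1, p) ∘L .inr ℝ _ _ :=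
    funext fun p ↦ ((hH.differentiable two_ne_zero (x.1, p)).hasFDerivAt.comp p
      (hasFDerivAt_prodMk_right x.1 p)).fderiv
  have hfiber' : HasFDerivAt (fun p ↦ fderiv ℝ H (x.1, p))
      (fderiv ℝ (fderiv ℝ H) x ∘L .inr ℝ _ _) x.2 :=
    (hH'.differentiable one_ne_zero x).hasFDerivAt.comp x.2 (hasFDerivAt_prodMk_right x.1 x.2)
  rw [iteratedFDeriv_two_apply, hfiber, (hfiber'.clm_comp (hasFDerivAt_const _ _)).fderiv,
    fderiv_hamVF hH, real_inner_comm]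
  simp [inner_symplecticGradient_fst]

end ConformalField

theorem IsHeight.heightOf_eq {d : ℕ} {G : Submodule ℝ (Phase d)} {S : Euc d →L[ℝ] Euc d}
    (hS : IsHeight G S) : heightOf G = S := by
  have hex : ∃ S, IsHeight G S := ⟨S, hS⟩
  rw [heightOf, dif_pos hex]
  ext1 v
  have hmem : ((v, S v) : Phase d) ∈ G := hS.2 ▸ rfl
  rw [hex.choose_spec.2] at hmem
  exact ((LinearMap.mem_graph_iff _ _).1 hmem).symm

namespace IsConformalFlow

variable {d : ℕ} {H : Phase d → ℝ} {lam : ℝ} {φ : ℝ → Phase d → Phase d}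

theorem isIntegralCurve (hφ : IsConformalFlow H lam φ) (x : Phase d) :
    IsIntegralCurve (fun τ ↦ φ τ x) (fun _ ↦ hamVF H lam) := hφ.2.2 x

theorem hasDerivAt_fderiv (hφ : IsConformalFlow H lam φ) (hH : ContDiff ℝ 2 H) (y : Phase d)
    (τ : ℝ) : HasDerivAt (fun τ ↦ fderiv ℝ (φ τ) y)
      (fderiv ℝ (hamVF H lam) (φ τ y) ∘L fderiv ℝ (φ τ) y) τ :=
  isIntegralCurve_fderiv_flow (contDiff_hamVF hH) hφ.1 hφ.isIntegralCurve y τ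

theorem symplecticForm_fderiv (hφ : IsConformalFlow H lam φ) (hH : ContDiff ℝ 2 H) (y : Phase d)
    (τ : ℝ) (u v : Phase d) :
    symplecticForm (fderiv ℝ (φ τ) y u) (fderiv ℝ (φ τ) y v) =
      Real.exp (-lam * τ) * symplecticForm u v :=
  bilin_apply_of_hasDerivAt_clm (fun σ ↦ symplecticForm_fderiv_hamVF hH (φ σ y))
    (hφ.hasDerivAt_fderiv hH y) (by rw [show φ 0 = id from funext hφ.1, fderiv_id]) τ u v

theorem apply_neg_apply (hφ : IsConformalFlow H lam φ) (t : ℝ) (z : Phase d) :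
    φ (-t) (φ t z) = z := by
  rw [hφ.2.1, neg_add_cancel, hφ.1]

theorem fderiv_neg_apply_fderiv (hφ : IsConformalFlow H lam φ) (hH : ContDiff ℝ 2 H) (t : ℝ)
    (z u : Phase d) : fderiv ℝ (φ (-t)) (φ t z) (fderiv ℝ (φ t) z u) = u := by
  have hdiff := differentiable_flow (contDiff_hamVF hH) hφ.1 hφ.isIntegralCurve
  have hinv : φ (-t) ∘ φ t = id := funext (hφ.apply_neg_apply t)
  rw [← ContinuousLinearMap.comp_apply, ← fderiv_comp z (hdiff _ _) (hdiff _ _), hinv, fderiv_id,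
    ContinuousLinearMap.id_apply]

theorem mem_pushV_iff (hφ : IsConformalFlow H lam φ) (hH : ContDiff ℝ 2 H) (t : ℝ)
    (y u : Phase d) : u ∈ pushV φ t (φ (-t) y) ↔ (fderiv ℝ (φ (-t)) y u).1 = 0 := by
  have hback := hφ.fderiv_neg_apply_fderiv hH t (φ (-t) y)
  have hforth := hφ.fderiv_neg_apply_fderiv hH (-t) y
  have hy : φ t (φ (-t) y) = y := by simpa using hφ.apply_neg_apply (-t) y
  rw [hy] at hback
  rw [neg_neg] at hforth
  simp only [pushV, Vert, Submodule.mem_map, Submodule.mem_prod, Submodule.mem_bot,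
    Submodule.mem_top, and_true, ContinuousLinearMap.coe_coe]
  constructor
  · rintro ⟨v, hv, rfl⟩
    rw [hback, hv]
  · exact fun h ↦ ⟨_, h, hforth u⟩

theorem isUnit_vertBlock (hφ : IsConformalFlow H lam φ) (hH : ContDiff ℝ 2 H) {y : Phase d}
    {t s : ℝ} (hn : NoConjPts φ y (uIcc (-t) 0)) (hs : 0 < s) (hst : s ≤ t) :
    IsUnit (vertBlock (fderiv ℝ (φ (-s)) y)) := by
  have htransverse : pushV φ s (φ (-s) y) ⊓ Vert d = ⊥ := by
    have h := hn (-s) ?_ 0 right_mem_uIcc (by linarith)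
    · rwa [zero_sub, neg_neg] at h
    · rw [uIcc_of_le (by linarith)]
      exact ⟨by linarith, by linarith⟩
  have hinj : Function.Injective (vertBlock (fderiv ℝ (φ (-s)) y)) := by
    refine (injective_iff_map_eq_zero _).2 fun p hp ↦ ?_
    have hmem : ((0, p) : Phase d) ∈ pushV φ s (φ (-s) y) ⊓ Vert d :=
      ⟨(hφ.mem_pushV_iff hH s y _).2 hp, by simp [Vert]⟩
    simpa [htransverse] using hmem
  exact ContinuousLinearMap.isUnit_iff_bijective.2
    ⟨hinj, (vertBlock (fderiv ℝ (φ (-s)) y)).toLinearMap.surjective_of_injective hinj⟩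

theorem hGreenPlus_eq (hφ : IsConformalFlow H lam φ) (hH : ContDiff ℝ 2 H) {y : Phase d} {t : ℝ}
    (hu : IsUnit (vertBlock (fderiv ℝ (φ (-t)) y))) :
    hGreenPlus φ t y = pullbackHeight (fderiv ℝ (φ (-t)) y) := by
  refine IsHeight.heightOf_eq ⟨inner_pullbackHeight_comm hu (Real.exp_pos _).ne'
    (hφ.symplecticForm_fderiv hH y (-t)), ?_⟩
  ext ⟨v, p⟩
  rw [hφ.mem_pushV_iff hH, fst_apply_eq_zero_iff_of_isUnit_vertBlock hu, LinearMap.mem_graph_iff]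
  rfl

theorem symLE_hGreenPlus (hφ : IsConformalFlow H lam φ) (hH : ContDiff ℝ 2 H)
    (hconvex : ∀ q p v, 0 ≤ iteratedFDeriv ℝ 2 (fun p' ↦ H (q, p')) p ![v, v]) {y : Phase d}
    {t s : ℝ} (hn : NoConjPts φ y (uIcc (-t) 0)) (hs : 0 < s) (hst : s ≤ t) :
    SymLE (hGreenPlus φ t y) (hGreenPlus φ s y) := by
  have hunit : ∀ τ ∈ Icc (-t) (-s), IsUnit (vertBlock (fderiv ℝ (φ τ) y)) := fun τ hτ ↦ by
    simpa using hφ.isUnit_vertBlock hH hn (s := -τ) (by linarith [hτ.2]) (by linarith [hτ.1])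
  rw [hφ.hGreenPlus_eq hH (hunit _ ⟨le_rfl, neg_le_neg hst⟩),
    hφ.hGreenPlus_eq hH (hunit _ ⟨neg_le_neg hst, le_rfl⟩)]
  intro v
  have hriccati := fun τ hτ ↦ hasDerivAt_inner_pullbackHeight (hφ.hasDerivAt_fderiv hH y τ)
    (hunit τ hτ) (Real.exp_pos _).ne' (hφ.symplecticForm_fderiv hH y τ) v
  have hmono : MonotoneOn (fun τ ↦ ⟪pullbackHeight (fderiv ℝ (φ τ) y) v, v⟫) (Icc (-t) (-s)) := by
    refine monotoneOn_of_deriv_nonneg (convex_Icc _ _)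
      (fun τ hτ ↦ (hriccati τ hτ).continuousAt.continuousWithinAt)
      (fun τ hτ ↦ (hriccati τ (interior_subset hτ)).differentiableAt.differentiableWithinAt)
      fun τ hτ ↦ ?_
    rw [(hriccati τ (interior_subset hτ)).deriv, inner_fderiv_hamVF_vertical hH]
    exact div_nonneg (hconvex _ _ _) (Real.exp_pos _).le
  exact hmono ⟨le_rfl, neg_le_neg hst⟩ ⟨neg_le_neg hst, le_rfl⟩ (neg_le_neg hst)

end IsConformalFlow

theorem tendstoLocallyUniformly_smul_of_continuous {α F : Type*} [TopologicalSpace α]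
    [NormedAddCommGroup F] [NormedSpace ℝ F] {ι : Type*} {l : Filter ι} {g : α → F}
    (hg : Continuous g) {as : ι → ℝ} {a : ℝ} (has : Tendsto as l (nhds a)) :
    TendstoLocallyUniformly (fun i x ↦ as i • g x) (fun x ↦ a • g x) l := by
  have hcoeff : TendstoLocallyUniformly (fun i (_ : α) ↦ as i) (fun _ ↦ a) l :=
    has.tendstoUniformly_const.tendstoLocallyUniformly
  have hconst : TendstoLocallyUniformly (fun _ ↦ g) g l := fun u hu _ ↦
    ⟨univ, univ_mem, .of_forall fun _ _ _ ↦ refl_mem_uniformity hu⟩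
  exact hcoeff.fun_smul₀ hconst continuous_const hg

section IteratedFDeriv

variable {E F : Type*} [NormedAddCommGroup E] [NormedSpace ℝ E] [NormedAddCommGroup F]
  [NormedSpace ℝ F]

theorem dist_iteratedFDeriv_one (f g : E → F) (x y : E) :
    dist (iteratedFDeriv ℝ 1 f x) (iteratedFDeriv ℝ 1 g y) =
      dist (fderiv ℝ f x) (fderiv ℝ g y) := by
  simpa only [iteratedFDerivWithin_univ, fderivWithin_univ] using
    dist_iteratedFDerivWithin_one f g (uniqueDiffWithinAt_univ (x := x))
      (uniqueDiffWithinAt_univ (x := y))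

theorem dist_iteratedFDeriv_succ (f g : E → F) (n : ℕ) (x y : E) :
    dist (iteratedFDeriv ℝ (n + 1) f x) (iteratedFDeriv ℝ (n + 1) g y) =
      dist (iteratedFDeriv ℝ n (fderiv ℝ f) x) (iteratedFDeriv ℝ n (fderiv ℝ g) y) := by
  rw [iteratedFDeriv_succ_eq_comp_right, iteratedFDeriv_succ_eq_comp_right, Function.comp_apply,
    Function.comp_apply, LinearIsometryEquiv.dist_map]

theorem tendstoLocallyUniformly_fderiv_of_iteratedFDeriv_one {ι : Type*} {l : Filter ι}
    {fs : ι → E → F} {f : E → F} (h : TendstoLocallyUniformly (fun i ↦ iteratedFDeriv ℝ 1 (fs i))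
      (iteratedFDeriv ℝ 1 f) l) :
    TendstoLocallyUniformly (fun i ↦ fderiv ℝ (fs i)) (fderiv ℝ f) l := by
  simpa only [Metric.tendstoLocallyUniformly_iff, dist_iteratedFDeriv_one] using h

theorem tendstoLocallyUniformly_iteratedFDeriv_fderiv {ι : Type*} {l : Filter ι}
    {fs : ι → E → F} {f : E → F} {n : ℕ}
    (h : TendstoLocallyUniformly (fun i ↦ iteratedFDeriv ℝ (n + 1) (fs i))
      (iteratedFDeriv ℝ (n + 1) f) l) :
    TendstoLocallyUniformly (fun i ↦ iteratedFDeriv ℝ n (fderiv ℝ (fs i)))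
      (iteratedFDeriv ℝ n (fderiv ℝ f)) l := by
  simpa only [Metric.tendstoLocallyUniformly_iff, dist_iteratedFDeriv_succ] using h

end IteratedFDeriv

section FamilyOfFields

variable {d : ℕ} {C ι : Type*} [MetricSpace C] {l : Filter ι} {Hfam : C → Phase d → ℝ}

theorem C2CompactOpenCont.tendstoLocallyUniformly_iteratedFDeriv (hcont : C2CompactOpenCont Hfam)
    {cs : ι → C} {c : C} (hcs : Tendsto cs l (nhds c)) {j : ℕ} (hj : j ≤ 2) :
    TendstoLocallyUniformly (fun i ↦ iteratedFDeriv ℝ j (Hfam (cs i)))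
      (iteratedFDeriv ℝ j (Hfam c)) l := by
  refine tendstoLocallyUniformly_iff_forall_isCompact.2 fun K hK ↦
    Metric.tendstoUniformlyOn_iff.2 fun ε hε ↦ ?_
  obtain ⟨δ, hδ, hclose⟩ := hcont c K hK (ε / 2) (half_pos hε)
  filter_upwards [Metric.tendsto_nhds.1 hcs δ hδ] with i hi x hx
  rw [dist_comm, dist_eq_norm]
  exact (hclose (cs i) hi j hj x hx).trans_lt (half_lt_self hε)

theorem C2CompactOpenCont.tendstoLocallyUniformly_fderiv (hcont : C2CompactOpenCont Hfam)
    {cs : ι → C} {c : C} (hcs : Tendsto cs l (nhds c)) :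
    TendstoLocallyUniformly (fun i ↦ fderiv ℝ (Hfam (cs i))) (fderiv ℝ (Hfam c)) l :=
  tendstoLocallyUniformly_fderiv_of_iteratedFDeriv_one
    (hcont.tendstoLocallyUniformly_iteratedFDeriv hcs one_le_two)

theorem C2CompactOpenCont.tendstoLocallyUniformly_fderiv_fderiv (hcont : C2CompactOpenCont Hfam)
    {cs : ι → C} {c : C} (hcs : Tendsto cs l (nhds c)) :
    TendstoLocallyUniformly (fun i ↦ fderiv ℝ (fderiv ℝ (Hfam (cs i))))
      (fderiv ℝ (fderiv ℝ (Hfam c))) l :=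
  tendstoLocallyUniformly_fderiv_of_iteratedFDeriv_one
    (tendstoLocallyUniformly_iteratedFDeriv_fderiv
      (hcont.tendstoLocallyUniformly_iteratedFDeriv hcs le_rfl))

variable {cs : ι → C} {c : C} {lams : ι → ℝ} {lam : ℝ}

theorem tendstoLocallyUniformly_hamVF (hsm : ∀ c, ContDiff ℝ 2 (Hfam c))
    (hcont : C2CompactOpenCont Hfam) (hcs : Tendsto cs l (nhds c))
    (hlams : Tendsto lams l (nhds lam)) :
    TendstoLocallyUniformly (fun i ↦ hamVF (Hfam (cs i)) (lams i)) (hamVF (Hfam c) lam) l := by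
  simp only [hamVF_eq_symplecticGradient ((hsm _).differentiable two_ne_zero)]
  exact ((symplecticGradient (E := Euc d)).uniformContinuous.comp_tendstoLocallyUniformly
    (hcont.tendstoLocallyUniformly_fderiv hcs)).fun_sub
      (tendstoLocallyUniformly_smul_of_continuous (ContinuousLinearMap.continuous _) hlams)

theorem tendstoLocallyUniformly_fderiv_hamVF (hsm : ∀ c, ContDiff ℝ 2 (Hfam c))
    (hcont : C2CompactOpenCont Hfam) (hcs : Tendsto cs l (nhds c))
    (hlams : Tendsto lams l (nhds lam)) :
    TendstoLocallyUniformly (fun i ↦ fderiv ℝ (hamVF (Hfam (cs i)) (lams i)))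
      (fderiv ℝ (hamVF (Hfam c) lam)) l := by
  simp only [funext (fderiv_hamVF (hsm _))]
  exact ((ContinuousLinearMap.compL ℝ (Phase d) (Phase d →L[ℝ] ℝ) (Phase d)
    symplecticGradient).uniformContinuous.comp_tendstoLocallyUniformly
      (hcont.tendstoLocallyUniformly_fderiv_fderiv hcs)).fun_sub
        (tendstoLocallyUniformly_smul_of_continuous continuous_const hlams)

end FamilyOfFields

section HeightOrder

variable {d : ℕ} {ε : ℝ}

theorem SymLE.trans {S T U : Euc d →L[ℝ] Euc d} (hST : SymLE S T) (hTU : SymLE T U) : SymLE S U :=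
  fun v ↦ (hST v).trans (hTU v)

theorem SymLE.of_tendsto {ι : Type*} {l : Filter ι} [l.NeBot] {Ss : ι → Euc d →L[ℝ] Euc d}
    {S T : Euc d →L[ℝ] Euc d} (hS : Tendsto Ss l (nhds S)) (hle : ∀ᶠ i in l, SymLE (Ss i) T) :
    SymLE S T := fun v ↦ by
  have hform : Continuous fun R : Euc d →L[ℝ] Euc d ↦ ⟪R v, v⟫ := by fun_prop
  exact le_of_tendsto ((hform.tendsto S).comp hS) (hle.mono fun _ hi ↦ hi v)

theorem symLE_add_smul_id_of_dist_le {S T : Euc d →L[ℝ] Euc d} (hST : dist S T ≤ ε) :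
    SymLE S (T + ε • ContinuousLinearMap.id ℝ (Euc d)) := fun v ↦ by
  have hdiff : ⟪(S - T) v, v⟫ ≤ ε * ⟪v, v⟫ := calc
    ⟪(S - T) v, v⟫ ≤ ‖(S - T) v‖ * ‖v‖ := real_inner_le_norm _ _
    _ ≤ ε * ‖v‖ * ‖v‖ := by gcongr; exact (S - T).le_of_opNorm_le (dist_eq_norm S T ▸ hST) v
    _ = ε * ⟪v, v⟫ := by rw [mul_assoc, real_inner_self_eq_norm_mul_norm]
  rw [sub_apply, inner_sub_left] at hdiff
  simp only [add_apply, smul_apply, ContinuousLinearMap.id_apply, inner_add_left,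
    real_inner_smul_left]
  linarith

end HeightOrder

theorem ConvexInFiber.iteratedFDeriv_nonneg {d : ℕ} {H : Phase d → ℝ} (hH : ConvexInFiber H)
    (q p v : Euc d) : 0 ≤ iteratedFDeriv ℝ 2 (fun p' ↦ H (q, p')) p ![v, v] := by
  obtain rfl | hv := eq_or_ne v 0
  · exact (ContinuousMultilinearMap.map_coord_zero _ (0 : Fin 2) rfl).ge
  · exact (hH q p v hv).le

section UpperSemicontinuity

variable {d : ℕ} {C : Type*} [MetricSpace C] {Hfam : C → Phase d → ℝ}
  {φfam : C → ℝ → ℝ → Phase d → Phase d} {x : Phase d} {c₀ : C} {lam₀ : ℝ}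

theorem continuousAt_hGreenPlus (hsm : ∀ c, ContDiff ℝ 2 (Hfam c))
    (hcont : C2CompactOpenCont Hfam)
    (hflow : ∀ c lam, IsConformalFlow (Hfam c) lam (φfam c lam)) {t : ℝ} (ht : 0 < t)
    (hn : NoConjPts (φfam c₀ lam₀) x (uIcc (-t) 0)) :
    ContinuousAt (fun z : Phase d × C × ℝ ↦ hGreenPlus (φfam z.2.1 z.2.2) t z.1)
      (x, c₀, lam₀) := by
  have hunit := (hflow c₀ lam₀).isUnit_vertBlock (hsm c₀) hn ht le_rfl
  have hcs : Tendsto (fun z : Phase d × C × ℝ ↦ z.2.1) (nhds (x, c₀, lam₀)) (nhds c₀) :=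
    (continuous_fst.comp continuous_snd).tendsto _
  have hlams : Tendsto (fun z : Phase d × C × ℝ ↦ z.2.2) (nhds (x, c₀, lam₀)) (nhds lam₀) :=
    (continuous_snd.comp continuous_snd).tendsto _
  have hfields := tendstoLocallyUniformly_hamVF hsm hcont hcs hlams
  have hfields' := tendstoLocallyUniformly_fderiv_hamVF hsm hcont hcs hlams
  have hfderiv : Tendsto (fun z : Phase d × C × ℝ ↦ fderiv ℝ (φfam z.2.1 z.2.2 (-t)) z.1)
      (nhds (x, c₀, lam₀)) (nhds (fderiv ℝ (φfam c₀ lam₀ (-t)) x)) :=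
    tendsto_fderiv_flow (φs := fun z : Phase d × C × ℝ ↦ φfam z.2.1 z.2.2)
      (contDiff_hamVF (hsm c₀)) (fun z ↦ contDiff_hamVF (hsm z.2.1)) (hflow c₀ lam₀).1
      (fun z ↦ (hflow z.2.1 z.2.2).1) (hflow c₀ lam₀).isIntegralCurve
      (fun z ↦ (hflow z.2.1 z.2.2).isIntegralCurve) (continuous_fst.tendsto _) hfields hfields' (-t)
  have hheight := (differentiableAt_pullbackHeight hunit).continuousAt.tendsto.comp hfderiv
  rw [ContinuousAt, (hflow c₀ lam₀).hGreenPlus_eq (hsm c₀) hunit]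
  refine hheight.congr' ?_
  filter_upwards [hfderiv.eventually (eventually_isUnit_vertBlock hunit)] with z hz
  exact ((hflow z.2.1 z.2.2).hGreenPlus_eq (hsm z.2.1) hz).symm

theorem exists_forall_eventually_symLE_hGreenPlus (hsm : ∀ c, ContDiff ℝ 2 (Hfam c))
    (hconvex : ∀ c q p v, 0 ≤ iteratedFDeriv ℝ 2 (fun p' ↦ Hfam c (q, p')) p ![v, v])
    (hcont : C2CompactOpenCont Hfam)
    (hflow : ∀ c lam, IsConformalFlow (Hfam c) lam (φfam c lam))
    (hn : ∀ t, 0 ≤ t → NoConjPts (φfam c₀ lam₀) x (uIcc (-t) 0)) {S₀ : Euc d →L[ℝ] Euc d}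
    (hS₀ : Tendsto (fun t ↦ hGreenPlus (φfam c₀ lam₀) t x) atTop (nhds S₀)) {ε : ℝ}
    (hε : 0 < ε) :
    ∃ T > 0, ∀ᶠ z : Phase d × C × ℝ in nhds (x, c₀, lam₀), ∀ t ≥ T,
      NoConjPts (φfam z.2.1 z.2.2) z.1 (uIcc (-t) 0) →
        SymLE (hGreenPlus (φfam z.2.1 z.2.2) t z.1)
          (S₀ + ε • ContinuousLinearMap.id ℝ (Euc d)) := by
  obtain ⟨T, hTclose, hT⟩ : ∃ T, dist (hGreenPlus (φfam c₀ lam₀) T x) S₀ < ε ∧ 0 < T :=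
    ((hS₀.eventually (ball_mem_nhds S₀ hε)).and (eventually_gt_atTop 0)).exists
  have hnear := (continuousAt_hGreenPlus hsm hcont hflow hT (hn T hT.le)).eventually
    (isOpen_ball.mem_nhds hTclose)
  refine ⟨T, hT, hnear.mono fun z hz t ht hnz ↦ ?_⟩
  exact ((hflow z.2.1 z.2.2).symLE_hGreenPlus (hsm z.2.1) (hconvex z.2.1) hnz hT ht).trans
    (symLE_add_smul_id_of_dist_le (le_of_lt hz))

theorem stmt_12_general (hsm : ∀ c, ContDiff ℝ 2 (Hfam c))
    (hconvex : ∀ c q p v, 0 ≤ iteratedFDeriv ℝ 2 (fun p' ↦ Hfam c (q, p')) p ![v, v])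
    (hcont : C2CompactOpenCont Hfam)
    (hflow : ∀ c lam, IsConformalFlow (Hfam c) lam (φfam c lam))
    (hn : ∀ t, 0 ≤ t → NoConjPts (φfam c₀ lam₀) x (uIcc (-t) 0)) {S₀ : Euc d →L[ℝ] Euc d}
    (hS₀ : Tendsto (fun t ↦ hGreenPlus (φfam c₀ lam₀) t x) atTop (nhds S₀)) {ε : ℝ}
    (hε : 0 < ε) :
    ∃ δ > 0, ∃ T > 0,
      (∀ y c lam t, dist y x < δ → dist c c₀ < δ → |lam - lam₀| < δ → T ≤ t →
        NoConjPts (φfam c lam) y (uIcc (-t) 0) →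
        SymLE (hGreenPlus (φfam c lam) t y) (S₀ + ε • ContinuousLinearMap.id ℝ (Euc d))) ∧
      (∀ y c lam, dist y x < δ → dist c c₀ < δ → |lam - lam₀| < δ →
        (∀ t, 0 ≤ t → NoConjPts (φfam c lam) y (uIcc (-t) 0)) →
        ∀ S, Tendsto (fun t ↦ hGreenPlus (φfam c lam) t y) atTop (nhds S) →
          SymLE S (S₀ + ε • ContinuousLinearMap.id ℝ (Euc d))) := by
  obtain ⟨T, hT, hnear⟩ :=
    exists_forall_eventually_symLE_hGreenPlus hsm hconvex hcont hflow hn hS₀ hε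
  obtain ⟨δ, hδ, hball⟩ := Metric.eventually_nhds_iff.1 hnear
  have hfinite : ∀ y c lam t, dist y x < δ → dist c c₀ < δ → |lam - lam₀| < δ → T ≤ t →
      NoConjPts (φfam c lam) y (uIcc (-t) 0) →
      SymLE (hGreenPlus (φfam c lam) t y) (S₀ + ε • ContinuousLinearMap.id ℝ (Euc d)) :=
    fun y c lam t hy hc hlam ht hny ↦
      hball (y := (y, c, lam)) (max_lt hy (max_lt hc hlam)) t ht hny
  refine ⟨δ, hδ, T, hT, hfinite, fun y c lam hy hc hlam hny S hS ↦ SymLE.of_tendsto hS ?_⟩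
  filter_upwards [eventually_ge_atTop T] with t ht
  exact hfinite y c lam t hy hc hlam ht (hny t (hT.le.trans ht))

end UpperSemicontinuity

/-- **Proposition (upper semicontinuity of `h₊`).** For a continuous family `c ↦ H_c` of
`C²`-convex-in-the-fiber Hamiltonians, `(x, c₀, λ₀) ∈ 𝒰₋^∞` and `ε > 0`, there are a
neighborhood `𝒩₊` of `(x, c₀, λ₀)` and `T > 0` such that
`h(-t,y,c,λ) ≤ h₊(x,c₀,λ₀) + ε·Id` for `(-t,y,c,λ) ∈ 𝒰₋` with `(y,c,λ) ∈ 𝒩₊`, `t ≥ T`,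
and `h₊(y,c,λ) ≤ h₊(x,c₀,λ₀) + ε·Id` for `(y,c,λ) ∈ 𝒩₊ ∩ 𝒰₋^∞`. -/
theorem stmt_12 {d : ℕ} {C : Type*} [MetricSpace C]
    (Hfam : C → Phase d → ℝ)
    (hsm : ∀ c, ContDiff ℝ 2 (Hfam c)) (hcvx : ∀ c, ConvexInFiber (Hfam c))
    (hper : ∀ c, PerPhase (Hfam c)) (hcont : C2CompactOpenCont Hfam)
    (φfam : C → ℝ → ℝ → Phase d → Phase d)
    (hflow : ∀ c lam, IsConformalFlow (Hfam c) lam (φfam c lam))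
    (x : Phase d) (c0 : C) (lam0 : ℝ)
    (hUinf : ∀ t : ℝ, 0 ≤ t → NoConjPts (φfam c0 lam0) x (uIcc (-t) 0))
    (S0 : Euc d →L[ℝ] Euc d)
    (hS0 : Tendsto (fun t => hGreenPlus (φfam c0 lam0) t x) atTop (nhds S0))
    (ε : ℝ) (hε : 0 < ε) :
    ∃ δ > (0:ℝ), ∃ T > (0:ℝ),
      (∀ (y : Phase d) (c : C) (lam t : ℝ),
        dist y x < δ → dist c c0 < δ → |lam - lam0| < δ → T ≤ t →
        NoConjPts (φfam c lam) y (uIcc (-t) 0) →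
        SymLE (hGreenPlus (φfam c lam) t y) (S0 + ε • ContinuousLinearMap.id ℝ (Euc d))) ∧
      (∀ (y : Phase d) (c : C) (lam : ℝ),
        dist y x < δ → dist c c0 < δ → |lam - lam0| < δ →
        (∀ t : ℝ, 0 ≤ t → NoConjPts (φfam c lam) y (uIcc (-t) 0)) →
        ∀ S : Euc d →L[ℝ] Euc d,
          Tendsto (fun t => hGreenPlus (φfam c lam) t y) atTop (nhds S) →
          SymLE S (S0 + ε • ContinuousLinearMap.id ℝ (Euc d))) :=
  stmt_12_general hsm (fun c ↦ (hcvx c).iteratedFDeriv_nonneg) hcont hflow hUinf hS0 hε
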